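/- arXiv:1303.4448 — 3 statements merged into one kernel-verified Lean document; each statement's English description precedes it below -/
import Mathlib

section
/- For N-bit binary numbers x and y and any m ≥ 0, the m-truncated addition agrees with ordinary addition modulo 2^N, i.e. x +_m y ≡ x + y (mod 2^N), if and only if the digit-sum sequence (x_i + y_i) for i = 0, 1, …, N−2 does not contain a 2 directly followed (in increasing index order) by a contiguous subsequence of m 1's; that is, if and only if there is no index j with 0 ≤ j ≤ N−2−m such that x_j + y_j = 2 and x_k + y_k = 1 for all k with j < k ≤ j + m. -/
/-- The `i`-th binary digit of `x`. -/
def bitd (x i : ℕ) : ℕ := (x / 2 ^ i) % 2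

open Classical in
/-- The `m`-truncated carry bit at position `i`: it is 1 iff there is
`i - m ≤ j < i` with `(x_j, y_j) = (1,1)` and `x_k + y_k = 1` for all `j < k < i`. -/
noncomputable def tcarry (m x y i : ℕ) : ℕ :=
  if ∃ j, i - m ≤ j ∧ j < i ∧ bitd x j = 1 ∧ bitd y j = 1 ∧
      (∀ k, j < k → k < i → bitd x k + bitd y k = 1) then 1 else 0

/-- The `m`-truncated addition of `N`-bit numbers: the bitwise xor of `x`, `y`
and the truncated carry array. -/
noncomputable def tadd (N m x y : ℕ) : ℕ :=
  ∑ i ∈ Finset.range N, ((bitd x i + bitd y i + tcarry m x y i) % 2) * 2 ^ i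

/-!
Let `cᵢ` be the ordinary carry into position `i`. The digits of `x + y` are `(xᵢ + yᵢ + cᵢ) % 2`,
so by uniqueness of binary expansions the truncated sum is correct iff every truncated carry below
`N` equals `cᵢ`. Now `cᵢ = 1` iff some position `j < i` with digit sum `2` is followed by digit sums
`1` up to position `i - 1`; such a `j` is unique, and truncation misses it iff `j + m < i`.
If truncation fails at any `i < N`, it already fails at `j + m + 1`, the first position that a carry
generated at `j` reaches but the window of length `m` does not.
-/

theorem sum_div_pow_mod_mul_pow (b x n : ℕ) :
    ∑ i ∈ Finset.range n, x / b ^ i % b * b ^ i = x % b ^ n := by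
  induction n with
  | zero => simp [Nat.mod_one]
  | succ n ih => rw [Finset.sum_range_succ, ih, Nat.mod_pow_succ, mul_comm]

theorem sum_mul_pow_eq_sum_mul_pow_iff {b n : ℕ} {f g : ℕ → ℕ} (hf : ∀ i < n, f i < b)
    (hg : ∀ i < n, g i < b) :
    ∑ i ∈ Finset.range n, f i * b ^ i = ∑ i ∈ Finset.range n, g i * b ^ i ↔
      ∀ i < n, f i = g i := by
  let F : Fin n → Fin b := fun i ↦ ⟨f i, hf i i.isLt⟩
  let G : Fin n → Fin b := fun i ↦ ⟨g i, hg i i.isLt⟩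
  calc
    _ ↔ finFunctionFinEquiv F = finFunctionFinEquiv G := by
      simp only [Fin.ext_iff, finFunctionFinEquiv_apply, Finset.sum_range, F, G]
    _ ↔ F = G := finFunctionFinEquiv.injective.eq_iff
    _ ↔ ∀ i < n, f i = g i := by simp only [funext_iff, Fin.ext_iff, Fin.forall_iff, F, G]

/-- The carry into position `i` when adding `x` and `y` in binary, in closed form: it is `1` iff the
parts of `x` and `y` below position `i` already sum to at least `2 ^ i`. -/
def addCarry (x y i : ℕ) : ℕ := if 2 ^ i ≤ x % 2 ^ i + y % 2 ^ i then 1 else 0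

/-- A carry generated at position `j` is propagated into position `i`: the digit sum is `2` at `j`
and `1` at every position strictly between `j` and `i`. -/
def CarryReaches (x y j i : ℕ) : Prop :=
  j < i ∧ bitd x j + bitd y j = 2 ∧ ∀ k, j < k → k < i → bitd x k + bitd y k = 1

variable {m x y i j k : ℕ}

theorem bitd_le_one (x i : ℕ) : bitd x i ≤ 1 :=
  Nat.le_of_lt_succ (Nat.mod_lt _ two_pos)

theorem addCarry_le_one (x y i : ℕ) : addCarry x y i ≤ 1 := by
  unfold addCarry; split_ifs <;> simp

theorem tcarry_le_one (m x y i : ℕ) : tcarry m x y i ≤ 1 := by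
  unfold tcarry; split_ifs <;> simp

theorem add_div_two_pow (x y i : ℕ) :
    (x + y) / 2 ^ i = x / 2 ^ i + y / 2 ^ i + addCarry x y i :=
  Nat.add_div (Nat.two_pow_pos i)

theorem bitd_add (x y i : ℕ) :
    bitd (x + y) i = (bitd x i + bitd y i + addCarry x y i) % 2 := by
  simp only [bitd, add_div_two_pow, Nat.add_mod, Nat.mod_mod]

theorem addCarry_zero (x y : ℕ) : addCarry x y 0 = 0 := by
  simp [addCarry, Nat.mod_one]

theorem addCarry_succ (x y i : ℕ) :
    addCarry x y (i + 1) = (bitd x i + bitd y i + addCarry x y i) / 2 := by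
  have hi := add_div_two_pow x y i
  have hsucc := add_div_two_pow x y (i + 1)
  simp only [pow_succ, ← Nat.div_div_eq_div_mul] at hsucc
  unfold bitd
  omega

theorem addCarry_succ_eq_one_iff :
    addCarry x y (i + 1) = 1 ↔
      bitd x i + bitd y i = 2 ∨ bitd x i + bitd y i = 1 ∧ addCarry x y i = 1 := by
  have hx := bitd_le_one x i
  have hy := bitd_le_one y i
  have hc := addCarry_le_one x y i
  rw [addCarry_succ]
  omega

namespace CarryReaches

theorem of_le (h : CarryReaches x y j i) (hjk : j < k) (hki : k ≤ i) : CarryReaches x y j k :=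
  ⟨hjk, h.2.1, fun l hjl hlk ↦ h.2.2 l hjl (hlk.trans_le hki)⟩

theorem unique (hj : CarryReaches x y j i) (hk : CarryReaches x y k i) : j = k := by
  obtain ⟨hji, hj2, hj1⟩ := hj
  obtain ⟨hki, hk2, hk1⟩ := hk
  rcases lt_trichotomy j k with hjk | rfl | hkj
  · have := hj1 k hjk hki
    omega
  · rfl
  · have := hk1 j hkj hji
    omega

end CarryReaches

theorem carryReaches_succ_iff :
    CarryReaches x y j (i + 1) ↔
      j = i ∧ bitd x i + bitd y i = 2 ∨ bitd x i + bitd y i = 1 ∧ CarryReaches x y j i := by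
  constructor
  · intro h
    rcases Nat.lt_succ_iff_lt_or_eq.1 h.1 with hji | rfl
    · exact .inr ⟨h.2.2 i hji i.lt_succ_self, h.of_le hji i.le_succ⟩
    · exact .inl ⟨rfl, h.2.1⟩
  · rintro (⟨rfl, h2⟩ | ⟨h1, hji, h2, hlt⟩)
    · exact ⟨j.lt_succ_self, h2, fun k hjk hkj ↦ by omega⟩
    · refine ⟨hji.trans i.lt_succ_self, h2, fun k hjk hk ↦ ?_⟩
      rcases Nat.lt_succ_iff_lt_or_eq.1 hk with hki | rfl
      exacts [hlt k hjk hki, h1]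

theorem addCarry_eq_one_iff : addCarry x y i = 1 ↔ ∃ j, CarryReaches x y j i := by
  induction i with
  | zero => simp [addCarry_zero, CarryReaches]
  | succ i ih =>
    simp only [addCarry_succ_eq_one_iff, carryReaches_succ_iff, ih, exists_or, exists_and_left,
      exists_eq_left]

theorem tcarry_eq_one_iff :
    tcarry m x y i = 1 ↔ ∃ j, CarryReaches x y j i ∧ i ≤ j + m := by
  have bitd_add_bitd_eq_two (j : ℕ) :
      bitd x j + bitd y j = 2 ↔ bitd x j = 1 ∧ bitd y j = 1 := by
    have hx := bitd_le_one x j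
    have hy := bitd_le_one y j
    omega
  simp only [tcarry, ite_eq_left_iff, zero_ne_one, imp_false, not_not, CarryReaches,
    bitd_add_bitd_eq_two, Nat.sub_le_iff_le_add, and_assoc]
  exact exists_congr fun j ↦ by tauto

theorem tcarry_eq_addCarry_iff :
    tcarry m x y i = addCarry x y i ↔ ∀ j, CarryReaches x y j i → i ≤ j + m := by
  have ht := tcarry_le_one m x y i
  have hc := addCarry_le_one x y i
  have eq_iff_one : tcarry m x y i = addCarry x y i ↔
      (tcarry m x y i = 1 ↔ addCarry x y i = 1) := by omega
  rw [eq_iff_one, tcarry_eq_one_iff, addCarry_eq_one_iff]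
  constructor
  · intro h j hj
    obtain ⟨l, hl, hil⟩ := h.2 ⟨j, hj⟩
    rwa [hj.unique hl]
  · exact fun h ↦ exists_congr fun j ↦ and_iff_left_of_imp (h j)

theorem tadd_eq_add_mod_iff_tcarry_eq_addCarry (N m x y : ℕ) :
    tadd N m x y = (x + y) % 2 ^ N ↔ ∀ i < N, tcarry m x y i = addCarry x y i := by
  rw [tadd, ← sum_div_pow_mod_mul_pow, sum_mul_pow_eq_sum_mul_pow_iff
    (fun _ _ ↦ Nat.mod_lt _ two_pos) (fun _ _ ↦ Nat.mod_lt _ two_pos)]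
  refine forall₂_congr fun i _ ↦ ?_
  have ht := tcarry_le_one m x y i
  have hc := addCarry_le_one x y i
  have hbit := bitd_add x y i
  rw [← bitd, hbit]
  omega

theorem tadd_eq_add_iff_general (N m x y : ℕ) :
    tadd N m x y = (x + y) % 2 ^ N ↔
      ¬∃ j, j + m + 2 ≤ N ∧ bitd x j + bitd y j = 2 ∧
        ∀ k, j < k → k ≤ j + m → bitd x k + bitd y k = 1 := by
  simp only [tadd_eq_add_mod_iff_tcarry_eq_addCarry, tcarry_eq_addCarry_iff]
  constructor
  · rintro h ⟨j, hjN, h2, h1⟩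
    have reaches : CarryReaches x y j (j + m + 1) :=
      ⟨by omega, h2, fun k hjk hk ↦ h1 k hjk (Nat.le_of_lt_succ hk)⟩
    have := h (j + m + 1) hjN j reaches
    omega
  · intro h i hiN j reaches
    by_contra! hlt
    obtain ⟨-, h2, h1⟩ := reaches.of_le (k := j + m + 1) (by omega) hlt
    exact h ⟨j, by omega, h2, fun k hjk hk ↦ h1 k hjk (Nat.lt_succ_of_le hk)⟩

/-- `x +_m y = x + y (mod 2^N)` iff the digit-sum sequence
`(x_i + y_i)` for `0 ≤ i ≤ N - 2` contains no `2` directly followed by `m`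
consecutive `1`'s, i.e. there is no `j` with `j + m ≤ N - 2` (phrased without
natural subtraction as `j + m + 2 ≤ N`) such that `x_j + y_j = 2` and
`x_k + y_k = 1` for all `j < k ≤ j + m`. -/
theorem tadd_eq_add_iff (N m x y : ℕ) (hN : 1 ≤ N) (hx : x < 2 ^ N) (hy : y < 2 ^ N) :
    tadd N m x y = (x + y) % 2 ^ N ↔
      ¬∃ j, j + m + 2 ≤ N ∧ bitd x j + bitd y j = 2 ∧
        ∀ k, j < k → k ≤ j + m → bitd x k + bitd y k = 1 :=
  tadd_eq_add_iff_general N m x y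
end

section
/- Fix m ≥ 1, and for each length ℓ let A_m(ℓ) denote the number of pairs of binary strings (x, y) of length ℓ whose digit-sum sequence avoids the pattern P(m) (a 2 directly followed, in increasing index order, by m consecutive 1's). Then for every j, A_m(j) = 4^j − Σ_{i=0}^{(j−1)−m} 2^m · 4^{j−1−m−i} · A_m(i), where the sum is empty when j ≤ m. In particular this recurrence determines A_m(j) for all j. -/
/-- The digit-sum sequence of the pair of length-`ℓ` binary strings `(x,y)` avoids the
pattern `P(m)`: there is no index `j` (with the whole pattern inside positions
`0, …, ℓ - 1`) where the digit sum is `2` directly followed by `m` consecutive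
digit sums equal to `1`. -/
def avoids (m ℓ x y : ℕ) : Prop :=
  ∀ j, j + m + 1 ≤ ℓ →
    ¬(bitd x j + bitd y j = 2 ∧ ∀ k, j < k → k ≤ j + m → bitd x k + bitd y k = 1)

open Classical in
/-- `A m ℓ` counts the pairs of length-`ℓ` binary strings whose digit-sum
sequence avoids the pattern `P(m)`. -/
noncomputable def A (m ℓ : ℕ) : ℕ :=
  ((Finset.range (2 ^ ℓ) ×ˢ Finset.range (2 ^ ℓ)).filter fun p => avoids m ℓ p.1 p.2).card

open Finset

lemma sum_range_mul_eq_sum_sum {M : Type*} [AddCommMonoid M] (f : ℕ → M) (a b : ℕ) :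
    ∑ x ∈ range (a * b), f x = ∑ d ∈ range a, ∑ r ∈ range b, f (d * b + r) := by
  induction a with
  | zero => simp
  | succ a ih => rw [Nat.succ_mul, sum_range_add, sum_range_succ, ih]

lemma add_sum_pow_mul_eq_pow_mul {R : Type*} [Semiring R] {q : R} {a b : ℕ → R}
    (h : ∀ n, a (n + 1) + b n = q * a n) (n : ℕ) :
    a n + ∑ i ∈ range n, q ^ (n - (i + 1)) * b i = q ^ n * a 0 := by
  induction n with
  | zero => simp
  | succ n ih =>
    have hshift : ∑ i ∈ range n, q ^ (n + 1 - (i + 1)) * b i =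
        q * ∑ i ∈ range n, q ^ (n - (i + 1)) * b i := by
      rw [mul_sum]
      refine sum_congr rfl fun i hi => ?_
      rw [← mul_assoc, ← pow_succ', ← Nat.sub_add_comm (mem_range.mp hi)]
    calc a (n + 1) + ∑ i ∈ range (n + 1), q ^ (n + 1 - (i + 1)) * b i
        = (a (n + 1) + b n) + q * ∑ i ∈ range n, q ^ (n - (i + 1)) * b i := by
          rw [sum_range_succ, hshift, Nat.sub_self, pow_zero, one_mul, add_assoc, add_comm (b n)]
      _ = q * (a n + ∑ i ∈ range n, q ^ (n - (i + 1)) * b i) := by rw [h, mul_add]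
      _ = q ^ (n + 1) * a 0 := by rw [ih, pow_succ', mul_assoc]

lemma dependsOn_and {ι : Type*} {α : ι → Type*} {P Q : (Π i, α i) → Prop} {S : Set ι}
    (hP : DependsOn P S) (hQ : DependsOn Q S) : DependsOn (fun s => P s ∧ Q s) S :=
  fun _ _ h => congrArg₂ And (hP h) (hQ h)

/-- The digit-sum sequence of the pair `(x, y)`, continued by zeros beyond the leading digits. -/
def digitSum (x y : ℕ) : ℕ → ℕ := fun i => bitd x i + bitd y i

/-- `P(r)` occurs in the sequence `s` at `i`: a `2` in position `i` and ones in the next `r`. -/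
def HasPatternAt (r i : ℕ) (s : ℕ → ℕ) : Prop :=
  s i = 2 ∧ ∀ k, i < k → k ≤ i + r → s k = 1

/-- No occurrence of `P(m)` in the sequence `s` lies within the positions `0, …, ℓ - 1`; this is
`avoids` for a sequence that need not be the digit-sum sequence of a pair. -/
def AvoidsPattern (m ℓ : ℕ) (s : ℕ → ℕ) : Prop :=
  ∀ i, i + m < ℓ → ¬ HasPatternAt m i s

open Classical in
/-- The number of pairs of length-`n` binary strings whose digit-sum sequence satisfies `P`. -/
noncomputable def pairCount (n : ℕ) (P : (ℕ → ℕ) → Prop) : ℕ :=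
  #{p ∈ range (2 ^ n) ×ˢ range (2 ^ n) | P (digitSum p.1 p.2)}

lemma A_eq_pairCount (m ℓ : ℕ) : A m ℓ = pairCount ℓ (AvoidsPattern m ℓ) := rfl

section Pattern

variable {m r i j ℓ : ℕ} {s : ℕ → ℕ}

lemma hasPatternAt_zero : HasPatternAt 0 i s ↔ s i = 2 :=
  ⟨And.left, fun h => ⟨h, fun _ _ _ => by omega⟩⟩

lemma hasPatternAt_succ :
    HasPatternAt (r + 1) i s ↔ HasPatternAt r i s ∧ s (i + r + 1) = 1 := by
  refine ⟨fun h => ⟨⟨h.1, fun k hik hkr => h.2 k hik (by omega)⟩, h.2 _ (by omega) le_rfl⟩, ?_⟩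
  rintro ⟨⟨htwo, hones⟩, hlast⟩
  refine ⟨htwo, fun k hik hkr => ?_⟩
  obtain hk | rfl : k ≤ i + r ∨ k = i + r + 1 := by omega
  · exact hones k hik hk
  · exact hlast

lemma HasPatternAt.add_lt_of_lt (hi : HasPatternAt m i s) (hj : HasPatternAt r j s)
    (hij : i < j) : i + m < j := by
  by_contra! hji
  have hone : s j = 1 := hi.2 j hij hji
  have htwo : s j = 2 := hj.1
  omega

lemma avoidsPattern_of_le (h : ℓ ≤ m) : AvoidsPattern m ℓ s :=
  fun _ _ => by omega

lemma avoidsPattern_add_succ :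
    AvoidsPattern m (i + m + 1) s ↔ AvoidsPattern m (i + m) s ∧ ¬ HasPatternAt m i s := by
  refine ⟨fun h => ⟨fun k hk => h k (by omega), h i (by omega)⟩, ?_⟩
  rintro ⟨hbefore, hlast⟩ k hk
  obtain hki | rfl : k < i ∨ k = i := by omega
  · exact hbefore k (by omega)
  · exact hlast

lemma HasPatternAt.avoidsPattern_add_iff (h : HasPatternAt m i s) :
    AvoidsPattern m (i + m) s ↔ AvoidsPattern m i s :=
  ⟨fun hav k hk => hav k (by omega),
    fun hav k hk hpat => hav k (hpat.add_lt_of_lt h (by omega)) hpat⟩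

end Pattern

lemma dependsOn_hasPatternAt (r i : ℕ) : DependsOn (HasPatternAt r i) (Set.Icc i (i + r)) := by
  intro s t h
  refine propext (and_congr ?_ (forall₃_congr fun k hik hkr => ?_))
  · rw [h i ⟨le_rfl, by omega⟩]
  · rw [h k ⟨hik.le, hkr⟩]

lemma dependsOn_avoidsPattern (m ℓ : ℕ) : DependsOn (AvoidsPattern m ℓ) (Set.Iio ℓ) := by
  intro s t h
  refine propext (forall₂_congr fun i hi => not_congr (iff_of_eq ?_))
  exact dependsOn_hasPatternAt m i fun k hk => h k (hk.2.trans_lt hi)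

section Digits

variable {n i d e r x y : ℕ}

lemma bitd_mod_two_pow (hi : i < n) (x : ℕ) : bitd (x % 2 ^ n) i = bitd x i := by
  simp only [bitd, ← Nat.toNat_testBit, Nat.testBit_mod_two_pow, hi, decide_true, Bool.true_and]

lemma bitd_mul_two_pow_add_of_lt (hi : i < n) : bitd (d * 2 ^ n + r) i = bitd r i := by
  rw [← bitd_mod_two_pow hi, Nat.mul_add_mod_self_right, bitd_mod_two_pow hi]

lemma bitd_mul_two_pow_add_self (hd : d < 2) (hr : r < 2 ^ n) : bitd (d * 2 ^ n + r) n = d := by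
  rw [bitd, mul_comm, Nat.mul_add_div (by positivity), Nat.div_eq_of_lt hr, add_zero,
    Nat.mod_eq_of_lt hd]

lemma digitSum_mul_two_pow_add_of_lt (hi : i < n) :
    digitSum (d * 2 ^ n + x) (e * 2 ^ n + y) i = digitSum x y i :=
  congrArg₂ (· + ·) (bitd_mul_two_pow_add_of_lt hi) (bitd_mul_two_pow_add_of_lt hi)

lemma digitSum_mul_two_pow_add_self (hd : d < 2) (he : e < 2) (hx : x < 2 ^ n) (hy : y < 2 ^ n) :
    digitSum (d * 2 ^ n + x) (e * 2 ^ n + y) n = d + e :=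
  congrArg₂ (· + ·) (bitd_mul_two_pow_add_self hd hx) (bitd_mul_two_pow_add_self he hy)

end Digits

section PairCount

variable {n : ℕ} {P Q : (ℕ → ℕ) → Prop}

lemma pairCount_congr (h : ∀ s, P s ↔ Q s) : pairCount n P = pairCount n Q :=
  congrArg (pairCount n) (funext fun s => propext (h s))

lemma pairCount_of_forall (h : ∀ s, P s) : pairCount n P = 4 ^ n := by
  simp only [pairCount, h, filter_true, card_product, card_range, ← mul_pow]
  norm_num

lemma pairCount_and_not_add_pairCount_and (n : ℕ) (P Q : (ℕ → ℕ) → Prop) :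
    pairCount n (fun s => P s ∧ ¬ Q s) + pairCount n (fun s => P s ∧ Q s) = pairCount n P := by
  classical
  simp only [pairCount, ← filter_filter]
  rw [add_comm, card_filter_add_card_filter_not]

lemma pairCount_succ_and (hP : DependsOn P (Set.Iio n)) (R : ℕ → Prop) [DecidablePred R] :
    pairCount (n + 1) (fun s => P s ∧ R (s n)) =
      #{d ∈ range 2 ×ˢ range 2 | R (d.1 + d.2)} * pairCount n P := by
  classical
  have hsplit {d e x y : ℕ} (hd : d ∈ range 2) (he : e ∈ range 2) (hx : x ∈ range (2 ^ n))
      (hy : y ∈ range (2 ^ n)) :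
      (P (digitSum (d * 2 ^ n + x) (e * 2 ^ n + y)) ∧
        R (digitSum (d * 2 ^ n + x) (e * 2 ^ n + y) n)) ↔ R (d + e) ∧ P (digitSum x y) := by
    rw [mem_range] at hd he hx hy
    rw [digitSum_mul_two_pow_add_self hd he hx hy,
      hP fun i hi => digitSum_mul_two_pow_add_of_lt hi, and_comm]
  rw [pairCount, pairCount, ← card_product, ← filter_product]
  simp only [card_filter, sum_product, pow_succ', sum_range_mul_eq_sum_sum]
  refine sum_congr rfl fun d hd => sum_comm.trans <| sum_congr rfl fun e he =>
    sum_congr rfl fun x hx => sum_congr rfl fun y hy => ?_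
  simp only [hsplit hd he hx hy]

lemma pairCount_succ (hP : DependsOn P (Set.Iio n)) : pairCount (n + 1) P = 4 * pairCount n P := by
  simpa using pairCount_succ_and hP fun _ => True

lemma pairCount_and_hasPatternAt {i : ℕ} (hP : DependsOn P (Set.Iio i)) (r : ℕ) :
    pairCount (i + r + 1) (fun s => P s ∧ HasPatternAt r i s) = 2 ^ r * pairCount i P := by
  induction r with
  | zero =>
    have htwo : #{d ∈ range 2 ×ˢ range 2 | d.1 + d.2 = 2} = 1 := rfl
    simp only [hasPatternAt_zero]
    rw [add_zero, pairCount_succ_and hP (· = 2), htwo, pow_zero]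
  | succ r ih =>
    have hdep : DependsOn (fun s => P s ∧ HasPatternAt r i s) (Set.Iio (i + r + 1)) :=
      dependsOn_and (hP.mono (Set.Iio_subset_Iio (by omega)))
        ((dependsOn_hasPatternAt r i).mono fun k hk => Nat.lt_succ_of_le hk.2)
    have hones : #{d ∈ range 2 ×ˢ range 2 | d.1 + d.2 = 1} = 2 := rfl
    simp only [hasPatternAt_succ, ← and_assoc]
    rw [← add_assoc, pairCount_succ_and hdep (· = 1), hones, ih, pow_succ', mul_assoc]

end PairCount

lemma A_eq_four_pow_of_le {m ℓ : ℕ} (h : ℓ ≤ m) : A m ℓ = 4 ^ ℓ :=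
  (A_eq_pairCount m ℓ).trans <| pairCount_of_forall fun _ => avoidsPattern_of_le h

lemma A_add_succ (m i : ℕ) : A m (i + m + 1) + 2 ^ m * A m i = 4 * A m (i + m) := by
  have havoid : A m (i + m + 1) = pairCount (i + m + 1)
      (fun s => AvoidsPattern m (i + m) s ∧ ¬ HasPatternAt m i s) :=
    (A_eq_pairCount m _).trans <| pairCount_congr fun _ => avoidsPattern_add_succ
  have hoccur : 2 ^ m * A m i = pairCount (i + m + 1)
      (fun s => AvoidsPattern m (i + m) s ∧ HasPatternAt m i s) :=
    (pairCount_and_hasPatternAt (dependsOn_avoidsPattern m i) m).symm.trans <|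
      pairCount_congr fun _ => and_congr_left fun h => h.avoidsPattern_add_iff.symm
  rw [havoid, hoccur, pairCount_and_not_add_pairCount_and,
    pairCount_succ (dependsOn_avoidsPattern m (i + m)), A_eq_pairCount]

/-- the recurrence
`A_m(j) = 4^j - ∑_{i=0}^{(j-1)-m} 2^m · 4^{j-1-m-i} · A_m(i)`
(the sum being empty when `j ≤ m`). -/
theorem A_recurrence (m : ℕ) (hm : 1 ≤ m) (j : ℕ) :
    A m j = 4 ^ j - ∑ i ∈ Finset.range (j - m), 2 ^ m * 4 ^ (j - (i + m + 1)) * A m i := by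
  obtain hjm | hmj := le_total j m
  · rw [Nat.sub_eq_zero_of_le hjm, sum_range_zero, Nat.sub_zero, A_eq_four_pow_of_le hjm]
  · obtain ⟨n, rfl⟩ := Nat.exists_eq_add_of_le' hmj
    have hstep (i : ℕ) : A m (i + 1 + m) + 2 ^ m * A m i = 4 * A m (i + m) := by
      rw [add_right_comm, A_add_succ]
    refine Nat.eq_sub_of_add_eq ?_
    calc A m (n + m) +
          ∑ i ∈ range (n + m - m), 2 ^ m * 4 ^ (n + m - (i + m + 1)) * A m i
        = A m (n + m) + ∑ i ∈ range n, 4 ^ (n - (i + 1)) * (2 ^ m * A m i) := by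
          simp only [Nat.add_sub_cancel, add_right_comm _ m 1, Nat.add_sub_add_right,
            mul_left_comm, mul_assoc]
      _ = 4 ^ n * A m (0 + m) := add_sum_pow_mul_eq_pow_mul (a := fun i => A m (i + m)) hstep n
      _ = 4 ^ (n + m) := by rw [zero_add, A_eq_four_pow_of_le le_rfl, pow_add]
end

section
/- For every N ≥ 1, every m ≥ 0, and every rotation amount r, the truncated MIX map on pairs of N-bit words defined by MIX_m(x, y) = (x +_m y, ρ(x) ⊕ (x +_m y)), where +_m is m-truncated addition, ρ is bitwise rotation by r positions, and ⊕ is bitwise XOR, is a bijection from pairs of N-bit words to pairs of N-bit words. -/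
/-- Bitwise rotation of an `N`-bit word by `r` positions: bit `i` of `rot N r x`
is bit `(i + r) % N` of `x`. -/
def rot (N r x : ℕ) : ℕ := ∑ i ∈ Finset.range N, bitd x ((i + r) % N) * 2 ^ i

/-!
The system `s = x +_m y`, `t = ρ(x) ⊕ s` is triangular: it gives `ρ(x) = t ⊕ s`, hence `x`, and then
`y` from `x +_m y = s`. So it suffices that `ρ` and each `y ↦ x +_m y` permute the finite set of
`N`-bit words, that is, that they are injective. For `y ↦ x +_m y` this holds because the truncated
carry into position `i` depends only on the digits below `i`: the digits of `y` can be recovered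
from `x` and `x +_m y` one at a time, starting from the lowest.
-/

section Digits

variable {b n : ℕ}

lemma sum_mul_pow_lt_pow {f : ℕ → ℕ} (hf : ∀ i < n, f i < b) :
    ∑ i ∈ Finset.range n, f i * b ^ i < b ^ n := by
  rw [Finset.sum_range]
  exact (finFunctionFinEquiv fun i : Fin n => (⟨f i, hf i i.isLt⟩ : Fin b)).isLt

lemma sum_mul_pow_div_pow_mod {f : ℕ → ℕ} (hf : ∀ i < n, f i < b) {i : ℕ} (hi : i < n) :
    (∑ k ∈ Finset.range n, f k * b ^ k) / b ^ i % b = f i := by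
  rw [Finset.sum_range]
  exact congrArg Fin.val (congrFun (finFunctionFinEquiv.symm_apply_apply
    fun k : Fin n => (⟨f k, hf k k.isLt⟩ : Fin b)) ⟨i, hi⟩)

lemma eq_of_div_pow_mod_eq {x y : ℕ} (hx : x < b ^ n) (hy : y < b ^ n)
    (h : ∀ i < n, x / b ^ i % b = y / b ^ i % b) : x = y := by
  have hxy : (⟨x, hx⟩ : Fin (b ^ n)) = ⟨y, hy⟩ :=
    finFunctionFinEquiv.symm.injective (funext fun i => Fin.ext (h i i.isLt))
  exact congrArg Fin.val hxy

end Digits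

lemma bitd_lt_two (x i : ℕ) : bitd x i < 2 := Nat.mod_lt _ two_pos

section Rotation

lemma rot_lt_two_pow (N r x : ℕ) : rot N r x < 2 ^ N :=
  sum_mul_pow_lt_pow fun _ _ => bitd_lt_two _ _

lemma bitd_rot {N i : ℕ} (r x : ℕ) (hi : i < N) : bitd (rot N r x) i = bitd x ((i + r) % N) :=
  sum_mul_pow_div_pow_mod (fun _ _ => bitd_lt_two _ _) hi

lemma exists_add_mod_eq {N i : ℕ} (r : ℕ) (hi : i < N) : ∃ k < N, (k + r) % N = i := by
  have : NeZero N := ⟨by omega⟩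
  obtain ⟨k, hk⟩ := add_right_surjective (Fin.ofNat N r) ⟨i, hi⟩
  exact ⟨k, k.isLt, by simpa [Fin.ext_iff, Fin.val_add] using hk⟩

lemma bijOn_rot (N r : ℕ) : Set.BijOn (rot N r) (Set.Iio (2 ^ N)) (Set.Iio (2 ^ N)) := by
  refine ((Set.finite_Iio _).injOn_iff_bijOn_of_mapsTo fun x _ => rot_lt_two_pow N r x).mp ?_
  intro x hx x' hx' h
  refine eq_of_div_pow_mod_eq hx hx' fun i hi => ?_
  obtain ⟨k, hk, rfl⟩ := exists_add_mod_eq r hi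
  calc bitd x ((k + r) % N) = bitd (rot N r x) k := (bitd_rot r x hk).symm
    _ = bitd (rot N r x') k := by rw [h]
    _ = bitd x' ((k + r) % N) := bitd_rot r x' hk

end Rotation

section TruncatedAddition

lemma tadd_lt_two_pow (N m x y : ℕ) : tadd N m x y < 2 ^ N :=
  sum_mul_pow_lt_pow fun _ _ => Nat.mod_lt _ two_pos

lemma bitd_tadd {N i : ℕ} (m x y : ℕ) (hi : i < N) :
    bitd (tadd N m x y) i = (bitd x i + bitd y i + tcarry m x y i) % 2 :=
  sum_mul_pow_div_pow_mod (fun _ _ => Nat.mod_lt _ two_pos) hi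

lemma tcarry_congr {x x' y y' i : ℕ} (m : ℕ) (hx : ∀ j < i, bitd x j = bitd x' j)
    (hy : ∀ j < i, bitd y j = bitd y' j) : tcarry m x y i = tcarry m x' y' i := by
  unfold tcarry
  congr 1
  refine propext (exists_congr fun j => and_congr_right fun _ => and_congr_right fun hj => ?_)
  have hpropagate : (∀ k, j < k → k < i → bitd x k + bitd y k = 1) ↔
      ∀ k, j < k → k < i → bitd x' k + bitd y' k = 1 :=
    forall₃_congr fun k _ hk => by rw [hx k hk, hy k hk]
  rw [hx j hj, hy j hj, hpropagate]

lemma bitd_eq_of_tadd_eq {N m x y y' : ℕ} (h : tadd N m x y = tadd N m x y') {i : ℕ}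
    (hi : i < N) : bitd y i = bitd y' i := by
  induction i using Nat.strong_induction_on with
  | _ i ih =>
    have hcarry : tcarry m x y i = tcarry m x y' i :=
      tcarry_congr m (fun _ _ => rfl) fun j hj => ih j hj (hj.trans hi)
    have hdigit : (bitd x i + bitd y i + tcarry m x y i) % 2 =
        (bitd x i + bitd y' i + tcarry m x y i) % 2 := by
      rw [← bitd_tadd m x y hi, h, bitd_tadd m x y' hi, hcarry]
    have := bitd_lt_two y i
    have := bitd_lt_two y' i
    omega

lemma bijOn_tadd (N m x : ℕ) : Set.BijOn (tadd N m x) (Set.Iio (2 ^ N)) (Set.Iio (2 ^ N)) := by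
  refine ((Set.finite_Iio _).injOn_iff_bijOn_of_mapsTo fun y _ => tadd_lt_two_pow N m x y).mp ?_
  intro y hy y' hy' h
  exact eq_of_div_pow_mod_eq hy hy' fun _ hi => bitd_eq_of_tadd_eq h hi

end TruncatedAddition

lemma bijOn_mix {α β : Type*} {A : Set α} {B : Set β} {W : Set ℕ} {ρ : α → ℕ} {s : α → β → ℕ}
    (hW : ∀ a ∈ W, ∀ b ∈ W, a ^^^ b ∈ W) (hρ : Set.BijOn ρ A W)
    (hs : ∀ x ∈ A, Set.BijOn (s x) B W) :
    Set.BijOn (fun p : α × β => (s p.1 p.2, ρ p.1 ^^^ s p.1 p.2)) (A ×ˢ B) (W ×ˢ W) := by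
  refine ⟨?mapsTo, ?injOn, ?surjOn⟩
  case mapsTo =>
    rintro ⟨x, y⟩ ⟨hx, hy⟩
    have hsum : s x y ∈ W := (hs x hx).mapsTo hy
    exact ⟨hsum, hW _ (hρ.mapsTo hx) _ hsum⟩
  case injOn =>
    rintro ⟨x, y⟩ ⟨hx, hy⟩ ⟨x', y'⟩ ⟨hx', hy'⟩ h
    obtain ⟨hsum, hxor⟩ : s x y = s x' y' ∧ ρ x ^^^ s x y = ρ x' ^^^ s x' y' := Prod.mk.inj h
    obtain rfl : x = x' := hρ.injOn hx hx' (Nat.xor_left_injective (hsum ▸ hxor))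
    obtain rfl : y = y' := (hs x hx).injOn hy hy' hsum
    rfl
  case surjOn =>
    rintro ⟨u, v⟩ ⟨hu, hv⟩
    obtain ⟨x, hx, hxv⟩ : ∃ x ∈ A, ρ x = v ^^^ u := hρ.surjOn (hW v hv u hu)
    obtain ⟨y, hy, rfl⟩ : ∃ y ∈ B, s x y = u := (hs x hx).surjOn hu
    exact ⟨(x, y), ⟨hx, hy⟩, by simp [hxv]⟩

/-- the truncated Threefish `MIX` map
`(x, y) ↦ (x +_m y, ρ(x) ⊕ (x +_m y))` is a bijection on pairs of `N`-bit words. -/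
theorem mix_trunc_bijOn (N m r : ℕ) (hN : 1 ≤ N) :
    Set.BijOn
      (fun p : ℕ × ℕ => (tadd N m p.1 p.2, rot N r p.1 ^^^ tadd N m p.1 p.2))
      (Set.Iio (2 ^ N) ×ˢ Set.Iio (2 ^ N)) (Set.Iio (2 ^ N) ×ˢ Set.Iio (2 ^ N)) :=
  bijOn_mix (fun _ ha _ hb => Nat.xor_lt_two_pow ha hb) (bijOn_rot N r)
    fun x _ => bijOn_tadd N m x
end
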